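/- arXiv:1711.03056 — 3 statements merged into one kernel-verified Lean document; each statement's English description precedes it below -/
import Mathlib

section
/- If E is a semi-decidable equivalence relation on ℕ in which every equivalence class is infinite (IC), then there exist decidable equivalence relations F and G on ℕ, with F IC, such that E = FGF (the composition of F, G, F) and E = F ∨ G (the transitive closure of F ∪ G). -/
/-- `E` is an equivalence relation on ℕ, viewed as a set of pairs:
reflexive, symmetric, transitive. -/
def IsEquivRel (E : Set (ℕ × ℕ)) : Prop :=
  (∀ n, (n, n) ∈ E) ∧ (∀ ⦃i j⦄, (i, j) ∈ E → (j, i) ∈ E) ∧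
    (∀ ⦃i j k⦄, (i, j) ∈ E → (j, k) ∈ E → (i, k) ∈ E)

/-- `H` is a symmetric relation. -/
def IsSymRel (H : Set (ℕ × ℕ)) : Prop := ∀ ⦃i j⦄, (i, j) ∈ H → (j, i) ∈ H

/-- `H` is a transitive relation. -/
def IsTransRel (H : Set (ℕ × ℕ)) : Prop :=
  ∀ ⦃i j k⦄, (i, j) ∈ H → (j, k) ∈ H → (i, k) ∈ H

/-- A relation on ℕ is decidable if membership in it is a computable predicate. -/
def DecidableRelSet (R : Set (ℕ × ℕ)) : Prop :=
  ComputablePred (fun p : ℕ × ℕ => p ∈ R)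

/-- `ν : ℕ₊ → ℕ × ℕ` (modelled as a function on ℕ, restricted to positive
arguments) is an enumeration of `R`: a computable function whose range (over
positive arguments) is `R`. -/
def IsEnumeration (ν : ℕ → ℕ × ℕ) (R : Set (ℕ × ℕ)) : Prop :=
  Computable ν ∧ R = {e | ∃ n, 1 ≤ n ∧ ν n = e}

/-- A relation on ℕ is semi-decidable (computably enumerable) if it is the
range of a computable function `ν : ℕ₊ → ℕ × ℕ`. -/
def SemiDecidableRel (R : Set (ℕ × ℕ)) : Prop := ∃ ν, IsEnumeration ν R

/-- A subset of ℕ is semi-decidable (computably enumerable) if it is the range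
of a computable function on positive arguments. -/
def SemiDecidableSet (A : Set ℕ) : Prop :=
  ∃ f : ℕ → ℕ, Computable f ∧ A = {a | ∃ n, 1 ≤ n ∧ f n = a}

/-- `E` is IC: every equivalence class `[i]_E = {j | (i,j) ∈ E}` is infinite. -/
def IC (E : Set (ℕ × ℕ)) : Prop := ∀ i, {j | (i, j) ∈ E}.Infinite

/-- `E` is FC: every equivalence class `[i]_E = {j | (i,j) ∈ E}` is finite. -/
def FC (E : Set (ℕ × ℕ)) : Prop := ∀ i, {j | (i, j) ∈ E}.Finite

/-- Composition of relations: `RS = {(i,k) | ∃ j, (i,j) ∈ R ∧ (j,k) ∈ S}`. -/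
def relComp (R S : Set (ℕ × ℕ)) : Set (ℕ × ℕ) :=
  {p | ∃ j, (p.1, j) ∈ R ∧ (j, p.2) ∈ S}

/-- Converse relation: `R⁻¹ = {(j,i) | (i,j) ∈ R}`. -/
def relInv (R : Set (ℕ × ℕ)) : Set (ℕ × ℕ) := {p | (p.2, p.1) ∈ R}

/-- Transitive closure of a relation, `tc R = ⋃_{n ≥ 1} Rⁿ`. -/
def tc (R : Set (ℕ × ℕ)) : Set (ℕ × ℕ) :=
  {p | Relation.TransGen (fun i j => (i, j) ∈ R) p.1 p.2}

/-- `ξ` is a coding of the enumeration `ν` (with `π = ν ∘ ξ`):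
a computable `ξ : ℕ₊ → ℕ₊` such that `1 < ξ(1)`, `π₁(π(1)) = π₁(ν(1))`,
`max {1, π₁(ν(1))} < π₂(π(1))`, and for every `n ≥ 1`: `ξ(n) < ξ(n+1)`,
`π₁(ν(ξ(n+1))) = π₁(ν(n+1))`, and
`max {π₁(π(n+1)), π₂(π(n))} < π₂(π(n+1))`. -/
def IsCoding (ν : ℕ → ℕ × ℕ) (ξ : ℕ → ℕ) : Prop :=
  Computable ξ ∧
  1 < ξ 1 ∧ (ν (ξ 1)).1 = (ν 1).1 ∧ max 1 (ν 1).1 < (ν (ξ 1)).2 ∧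
  ∀ n, 1 ≤ n →
    ξ n < ξ (n + 1) ∧ (ν (ξ (n + 1))).1 = (ν (n + 1)).1 ∧
    max (ν (ξ (n + 1))).1 (ν (ξ n)).2 < (ν (ξ (n + 1))).2

/-- `R_ξ = {π(n) | n ∈ ℕ₊}` where `π = ν ∘ ξ`. -/
def Rcod (ν : ℕ → ℕ × ℕ) (ξ : ℕ → ℕ) : Set (ℕ × ℕ) :=
  {e | ∃ n, 1 ≤ n ∧ ν (ξ n) = e}

/-- `S_ξ = {(π₂(π(m)), π₂(π(n))) | m, n ∈ ℕ₊ and ν(n) = (ν(m))⁻¹}`. -/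
def Scod (ν : ℕ → ℕ × ℕ) (ξ : ℕ → ℕ) : Set (ℕ × ℕ) :=
  {e | ∃ m, 1 ≤ m ∧ ∃ n, 1 ≤ n ∧ ν n = ((ν m).2, (ν m).1) ∧
    e = ((ν (ξ m)).2, (ν (ξ n)).2)}

/-- `T_ξ = {(π₂(π(m)), π₂(π(n))) | m, n ∈ ℕ₊ and ν(n) = ν(m)}`. -/
def Tcod (ν : ℕ → ℕ × ℕ) (ξ : ℕ → ℕ) : Set (ℕ × ℕ) :=
  {e | ∃ m, 1 ≤ m ∧ ∃ n, 1 ≤ n ∧ ν n = ν m ∧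
    e = ((ν (ξ m)).2, (ν (ξ n)).2)}

/-- The identity relation `I = {(n,n) | n ∈ ℕ}`. -/
def diagRel : Set (ℕ × ℕ) := {p | p.1 = p.2}

/-- The field of a relation: `F(H) = {i | ∃ j, (i,j) ∈ H ∨ (j,i) ∈ H}`. -/
def fld (H : Set (ℕ × ℕ)) : Set ℕ := {i | ∃ j, (i, j) ∈ H ∨ (j, i) ∈ H}

/-!
List the pairs of `E` as `(aₙ, bₙ)`. Since every class of `E` is infinite, one can search for
`y₀ < y₁ < ⋯` with `yₙ` equivalent to `aₙ` and `aₙ < yₙ`. As `y` is increasing, its range is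
decidable, so sending `yₙ` to `aₙ`, respectively to `bₙ`, and fixing all other numbers defines two
computable maps `p` and `q` which stay inside the classes of `E`. Let `G` be the kernel of `q` and
`F` the kernel of the map sending `x` to the fixed point at which the iterates of `p` end, which
they do because `p x ≤ x`.

Given `(i, j) ∈ E`, pick `m` and `n` with `(aₘ, bₘ) = (i, j)` and `(aₙ, bₙ) = (j, j)`. Then
`i = aₘ` and `yₘ` are related by `F`, `yₘ` and `yₙ` by `G` because `bₘ = bₙ`, and `yₙ` and
`aₙ = j` by `F`.
-/

section Computability

variable {α β γ : Type*} [Primcodable α] [Primcodable β] [Primcodable γ]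

theorem computablePred_primrecRel_comp {R : β → γ → Prop} {f : α → β} {g : α → γ}
    (hR : PrimrecRel R) (hf : Computable f) (hg : Computable g) :
    ComputablePred fun a => R (f a) (g a) :=
  ComputablePred.computable_of_manyOneReducible ⟨_, hf.pair hg, fun _ => Iff.rfl⟩
    hR.computablePred

theorem computable_iterate {n : α → ℕ} {g : α → β} {f : β → β} (hn : Computable n)
    (hg : Computable g) (hf : Computable f) : Computable fun a => f^[n a] (g a) := by
  refine (Computable.nat_rec hn hg (h := fun _ q => f q.2)
    (hf.comp (Computable.snd.comp Computable.snd))).of_eq fun a => ?_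
  induction n a with
  | zero => rfl
  | succ k ih => rw [Function.iterate_succ_apply', ← ih]

theorem computable_extend_of_strictMono {y : ℕ → ℕ} {g j : ℕ → α} (hy : Computable y)
    (hmono : StrictMono y) (hg : Computable g) (hj : Computable j) :
    Computable (Function.extend y g j) := by
  have exists_le : ∀ x, ∃ k, x ≤ y k := fun x => ⟨x, hmono.le_apply⟩
  let index x := Nat.find (exists_le x)
  have hindex : Computable index := Computable.find (P := fun x k => x ≤ y k)
    (computablePred_primrecRel_comp Primrec.nat_le .fst (hy.comp .snd)) exists_le
  have index_apply : ∀ n, index (y n) = n := fun n =>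
    (Nat.find_eq_iff _).2 ⟨le_rfl, fun _ hk => (hmono hk).not_ge⟩
  have hrange : ComputablePred fun x => y (index x) = x :=
    computablePred_primrecRel_comp Primrec.eq (hy.comp hindex) .id
  refine (hrange.decide.cond (hg.comp hindex) hj).of_eq fun x => ?_
  by_cases hx : ∃ n, y n = x
  · obtain ⟨n, rfl⟩ := hx
    simp [index_apply, hmono.injective.extend_apply]
  · rw [Function.extend_apply' _ _ _ hx, decide_eq_false fun h => hx ⟨_, h⟩, cond_false]

theorem exists_computable_selector_gt {e : ℕ → α × ℕ} (he : Computable e) {a : β → α}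
    (ha : Computable a) (hinf : ∀ b, {j | (a b, j) ∈ Set.range e}.Infinite) :
    ∃ s : β × ℕ → ℕ, Computable s ∧ ∀ p, (a p.1, s p) ∈ Set.range e ∧ p.2 < s p := by
  classical
  let R (p q : α × ℕ) : Prop := q.1 = p.1 ∧ p.2 < q.2
  have hR : PrimrecRel R := PrimrecPred.and
    (Primrec.eq.comp (Primrec.fst.comp .snd) (Primrec.fst.comp .fst))
    (Primrec.nat_lt.comp (Primrec.snd.comp .fst) (Primrec.snd.comp .snd))
  have exists_index : ∀ p : β × ℕ, ∃ k, R (a p.1, p.2) (e k) := by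
    intro p
    obtain ⟨j, ⟨k, hk⟩, hj⟩ := (hinf p.1).exists_gt p.2
    exact ⟨k, by rw [hk], by rwa [hk]⟩
  have hindex : Computable fun p => Nat.find (exists_index p) :=
    Computable.find (P := fun (p : β × ℕ) k => R (a p.1, p.2) (e k))
      (computablePred_primrecRel_comp hR (((ha.comp .fst).pair .snd).comp .fst) (he.comp .snd))
      exists_index
  refine ⟨_, Computable.snd.comp (he.comp hindex), fun p => ?_⟩
  obtain ⟨hfst, hlt⟩ := Nat.find_spec (exists_index p)
  exact ⟨⟨_, Prod.ext hfst rfl⟩, hlt⟩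

theorem exists_computable_strictMono_selector_gt {e : ℕ → α × ℕ} (he : Computable e) {a : ℕ → α}
    (ha : Computable a) {c : ℕ → ℕ} (hc : Computable c)
    (hinf : ∀ n, {j | (a n, j) ∈ Set.range e}.Infinite) :
    ∃ y : ℕ → ℕ, Computable y ∧ StrictMono y ∧
      (∀ n, (a n, y n) ∈ Set.range e) ∧ ∀ n, c n < y n := by
  obtain ⟨s, hs, hspec⟩ := exists_computable_selector_gt he ha hinf
  let y : ℕ → ℕ := Nat.rec (s (0, c 0)) fun n v => s (n + 1, max (c (n + 1)) v)
  have y_succ : ∀ n, y (n + 1) = s (n + 1, max (c (n + 1)) (y n)) := fun _ => rfl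
  have y_eq : ∀ n, ∃ v, c n ≤ v ∧ y n = s (n, v)
    | 0 => ⟨c 0, le_rfl, rfl⟩
    | n + 1 => ⟨_, le_max_left _ _, y_succ n⟩
  have hsucc : Computable fun q : ℕ × ℕ × ℕ => q.2.1 + 1 :=
    Computable.succ.comp (Computable.fst.comp .snd)
  refine ⟨y, ?_, strictMono_nat_of_lt_succ fun n => ?_, fun n => ?_, fun n => ?_⟩
  · exact Computable.nat_rec .id (.const _) (h := fun _ q => s (q.1 + 1, max (c (q.1 + 1)) q.2))
      (hs.comp (hsucc.pair
        (Primrec.nat_max.to_comp.comp (hc.comp hsucc) (Computable.snd.comp .snd))))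
  · rw [y_succ]
    exact (le_max_right _ _).trans_lt (hspec (n + 1, _)).2
  · obtain ⟨v, -, hv⟩ := y_eq n
    exact hv ▸ (hspec (n, v)).1
  · obtain ⟨v, hcv, hv⟩ := y_eq n
    exact hv ▸ hcv.trans_lt (hspec (n, v)).2

end Computability

theorem SemiDecidableRel.exists_range_eq {R : Set (ℕ × ℕ)} (hR : SemiDecidableRel R) :
    ∃ e : ℕ → ℕ × ℕ, Computable e ∧ Set.range e = R := by
  obtain ⟨ν, hν, rfl⟩ := hR
  refine ⟨fun n => ν (n + 1), hν.comp Computable.succ, Set.ext fun p => ?_⟩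
  constructor
  · rintro ⟨n, rfl⟩
    exact ⟨n + 1, n.succ_pos, rfl⟩
  · rintro ⟨n, hn, rfl⟩
    exact ⟨n - 1, by simp only [Nat.sub_add_cancel hn]⟩

section Extend

open Function

variable {α β γ : Type*} {f : α → β} {g : α → γ} {j : β → γ}

theorem rel_extend (hf : Injective f) {P : β → γ → Prop} (hg : ∀ a, P (f a) (g a))
    (hj : ∀ b, P b (j b)) (b : β) : P b (extend f g j b) := by
  by_cases hb : ∃ a, f a = b
  · obtain ⟨a, rfl⟩ := hb
    rw [hf.extend_apply]
    exact hg a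
  · rw [extend_apply' _ _ _ hb]
    exact hj b

theorem infinite_fiber_extend (hf : Injective f) {c : γ} (hc : {a | g a = c}.Infinite) :
    {b | extend f g j b = c}.Infinite := by
  refine (hc.image hf.injOn).mono ?_
  rintro _ ⟨a, ha, rfl⟩
  exact (hf.extend_apply g j a).trans ha

end Extend

/-- The kernel of `f`, i.e. `Setoid.ker f` written as a set of pairs. -/
def kerRel {β : Type*} (f : ℕ → β) : Set (ℕ × ℕ) := {p | f p.1 = f p.2}

theorem isEquivRel_kerRel {β : Type*} (f : ℕ → β) : IsEquivRel (kerRel f) :=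
  ⟨fun _ => rfl, fun _ _ => Eq.symm, fun _ _ _ => Eq.trans⟩

theorem decidableRelSet_kerRel {β : Type*} [Primcodable β] {f : ℕ → β} (hf : Computable f) :
    DecidableRelSet (kerRel f) :=
  computablePred_primrecRel_comp (f := fun p : ℕ × ℕ => f p.1) Primrec.eq
    (hf.comp .fst) (hf.comp .snd)

theorem IsEquivRel.kerRel_subset {E : Set (ℕ × ℕ)} (hE : IsEquivRel E) {f : ℕ → ℕ}
    (hf : ∀ x, (x, f x) ∈ E) : kerRel f ⊆ E := by
  obtain ⟨-, hsymm, htrans⟩ := hE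
  rintro ⟨i, j⟩ (hij : f i = f j)
  exact htrans (hf i) (hij ▸ hsymm (hf j))

theorem IsEquivRel.extend_mem {E : Set (ℕ × ℕ)} (hE : IsEquivRel E) {ι : Type*} {y g : ι → ℕ}
    (hy : Function.Injective y) (hg : ∀ n, (y n, g n) ∈ E) (x : ℕ) :
    (x, Function.extend y g id x) ∈ E :=
  rel_extend hy (P := fun x z => (x, z) ∈ E) hg hE.1 x

theorem IsEquivRel.iterate_mem {E : Set (ℕ × ℕ)} (hE : IsEquivRel E) {f : ℕ → ℕ}
    (hf : ∀ x, (x, f x) ∈ E) (k x : ℕ) : (x, f^[k] x) ∈ E := by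
  obtain ⟨hrefl, -, htrans⟩ := hE
  induction k with
  | zero => exact hrefl x
  | succ k ih =>
    rw [Function.iterate_succ_apply']
    exact htrans ih (hf _)

section IterRoot

variable {p : ℕ → ℕ}

/-- The fixed point at which the iterates of `p` starting from `x` end, for a map `p` with
`p x ≤ x` for all `x`: such a map strictly decreases at most `x` times from `x` on, so `x`
iterations suffice. -/
def iterRoot (p : ℕ → ℕ) (x : ℕ) : ℕ := p^[x] x

theorem computable_iterRoot (hp : Computable p) : Computable (iterRoot p) :=
  computable_iterate .id .id hp

theorem isFixedPt_iterate_of_le (hp : ∀ x, p x ≤ x) {x k : ℕ} (hk : x ≤ k) :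
    Function.IsFixedPt p (p^[k] x) := by
  induction x using Nat.strong_induction_on generalizing k with
  | _ x ih =>
    rcases (hp x).eq_or_lt with hfix | hlt
    · rwa [Function.iterate_fixed hfix]
    · obtain ⟨k, rfl⟩ : ∃ l, k = l + 1 := Nat.exists_eq_add_one.2 (by lia)
      rw [Function.iterate_succ_apply]
      exact ih (p x) hlt (by lia)

theorem iterate_eq_iterRoot (hp : ∀ x, p x ≤ x) {x k : ℕ} (hk : x ≤ k) :
    p^[k] x = iterRoot p x := by
  obtain ⟨d, rfl⟩ := Nat.exists_eq_add_of_le' hk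
  rw [Function.iterate_add_apply]
  exact Function.iterate_fixed (isFixedPt_iterate_of_le hp le_rfl) d

theorem iterRoot_apply (hp : ∀ x, p x ≤ x) (x : ℕ) : iterRoot p (p x) = iterRoot p x := by
  rw [← iterate_eq_iterRoot hp (hp x), ← Function.iterate_succ_apply,
    iterate_eq_iterRoot hp x.le_succ]

theorem ic_kerRel_iterRoot (hp : ∀ x, p x ≤ x) (hfiber : ∀ i, {x | p x = i}.Infinite) :
    IC (kerRel (iterRoot p)) := by
  refine fun i => (hfiber i).mono ?_
  rintro x rfl
  exact iterRoot_apply hp x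

end IterRoot

section RelComp

variable {E F G R S T : Set (ℕ × ℕ)}

theorem subset_tc : R ⊆ tc R := fun _ hp => Relation.TransGen.single hp

theorem tc_subset (hE : IsTransRel E) (hR : R ⊆ E) : tc R ⊆ E := by
  rintro ⟨i, j⟩ (hij : Relation.TransGen _ i j)
  induction hij with
  | single h => exact hR h
  | tail _ h ih => exact hE ih (hR h)

theorem relComp_subset_tc (hR : R ⊆ tc T) (hS : S ⊆ tc T) : relComp R S ⊆ tc T := by
  rintro ⟨i, k⟩ ⟨j, hij, hjk⟩
  have hij : (i, j) ∈ tc T := hR hij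
  have hjk : (j, k) ∈ tc T := hS hjk
  exact Relation.TransGen.trans hij hjk

theorem eq_relComp_and_eq_tc (hE : IsTransRel E) (hF : F ⊆ E) (hG : G ⊆ E)
    (hEF : E ⊆ relComp (relComp F G) F) :
    E = relComp (relComp F G) F ∧ E = tc (F ∪ G) := by
  have hFtc : F ⊆ tc (F ∪ G) := Set.subset_union_left.trans subset_tc
  have hGtc : G ⊆ tc (F ∪ G) := Set.subset_union_right.trans subset_tc
  have hcomp : relComp (relComp F G) F ⊆ tc (F ∪ G) :=
    relComp_subset_tc (relComp_subset_tc hFtc hGtc) hFtc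
  have htc : tc (F ∪ G) ⊆ E := tc_subset hE (Set.union_subset hF hG)
  exact ⟨hEF.antisymm (hcomp.trans htc), (hEF.trans hcomp).antisymm htc⟩

end RelComp

theorem range_subset_relComp_kerRel {β : Type*} {e : ℕ → ℕ × ℕ}
    (hrefl : ∀ j, (j, j) ∈ Set.range e) {y q : ℕ → ℕ} {r : ℕ → β}
    (hr : ∀ n, r (e n).1 = r (y n)) (hq : ∀ n, q (y n) = (e n).2) :
    Set.range e ⊆ relComp (relComp (kerRel r) (kerRel q)) (kerRel r) := by
  rintro _ ⟨m, rfl⟩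
  obtain ⟨n, hn⟩ := hrefl (e m).2
  have hy : q (y m) = q (y n) := by rw [hq, hq, hn]
  have hj : r (y n) = r (e m).2 := by rw [← hr, hn]
  exact ⟨y n, ⟨y m, hr m, hy⟩, hj⟩

theorem infinite_setOf_fst_eq {α β : Type*} {e : ℕ → α × β} {i : α}
    (h : {j | (i, j) ∈ Set.range e}.Infinite) : {n | (e n).1 = i}.Infinite := by
  refine Set.Infinite.of_image (fun n => (e n).2) (h.mono ?_)
  rintro j ⟨n, hn⟩
  exact ⟨n, congrArg Prod.fst hn, congrArg Prod.snd hn⟩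

theorem stmt_1 (E : Set (ℕ × ℕ)) (hE : IsEquivRel E) (hsd : SemiDecidableRel E)
    (hIC : IC E) :
    ∃ F G : Set (ℕ × ℕ),
      IsEquivRel F ∧ IsEquivRel G ∧ DecidableRelSet F ∧ DecidableRelSet G ∧
      IC F ∧
      E = relComp (relComp F G) F ∧ E = tc (F ∪ G) := by
  obtain ⟨e, he, rfl⟩ := hsd.exists_range_eq
  obtain ⟨hrefl, hsymm, htrans⟩ := id hE
  have ha : Computable fun n => (e n).1 := Computable.fst.comp he
  have hb : Computable fun n => (e n).2 := Computable.snd.comp he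
  obtain ⟨y, hy, hmono, hay, hlt⟩ :=
    exists_computable_strictMono_selector_gt he ha ha fun n => hIC _
  have hinj := hmono.injective
  let p := Function.extend y (fun n => (e n).1) id
  let q := Function.extend y (fun n => (e n).2) id
  have hp_le : ∀ x, p x ≤ x := rel_extend hinj (P := fun x z => z ≤ x) (fun n => (hlt n).le) le_refl
  have hpE : ∀ x, (x, p x) ∈ Set.range e := hE.extend_mem hinj fun n => hsymm (hay n)
  have hqE : ∀ x, (x, q x) ∈ Set.range e :=
    hE.extend_mem hinj fun n => htrans (hsymm (hay n)) ⟨n, rfl⟩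
  have hpy : ∀ n, p (y n) = (e n).1 := hinj.extend_apply _ _
  have hqy : ∀ n, q (y n) = (e n).2 := hinj.extend_apply _ _
  refine ⟨kerRel (iterRoot p), kerRel q, isEquivRel_kerRel _, isEquivRel_kerRel _,
    decidableRelSet_kerRel (computable_iterRoot (computable_extend_of_strictMono hy hmono ha .id)),
    decidableRelSet_kerRel (computable_extend_of_strictMono hy hmono hb .id),
    ic_kerRel_iterRoot hp_le fun i => infinite_fiber_extend hinj (infinite_setOf_fst_eq (hIC i)),
    eq_relComp_and_eq_tc htrans (hE.kerRel_subset fun x => hE.iterate_mem hpE x x)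
      (hE.kerRel_subset hqE) ?_⟩
  exact range_subset_relComp_kerRel hrefl (fun n => hpy n ▸ iterRoot_apply hp_le (y n)) hqy
end

section
/- If some enumeration ν of an equivalence relation E on ℕ has a coding ξ, then for every i ∈ ℕ₊ the set {n | π₁(π(n)) = i} is infinite (where π = ν∘ξ), and every equivalence class of E is infinite. Specifically, if ν(k) = (i,i), then {π(ξⁿ(k)) | n ∈ ℕ} = {i} × {π₂(π(ξⁿ(k))) | n ∈ ℕ} is an infinite subset of E. -/
/-!
A coding `ξ` moves every positive index forward, keeps the first coordinate of `ν`, and makes the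
second coordinate of `π = ν ∘ ξ` strictly increasing. Along the orbit `k, ξ k, ξ² k, …` the indices
therefore increase forever, the first coordinate of `π` stays equal to that of `ν k`, and the second
coordinates of `π` are pairwise distinct: the row of `E` through `ν k` is infinite. Every `i` owns
such a row because `(i, i) ∈ E` is enumerated.
-/

open Set Function

section Iterate

variable {ι α : Type*} {s : Set ι} {f : ι → ι} {k : ι}

lemma strictMono_iterate_of_forall_mem_lt [Preorder ι] (hs : MapsTo f s s)
    (hlt : ∀ n ∈ s, n < f n) (hk : k ∈ s) : StrictMono fun n ↦ f^[n] k :=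
  strictMono_nat_of_lt_succ fun n ↦ by
    simpa only [iterate_succ_apply'] using hlt _ (hs.iterate n hk)

lemma apply_iterate_eq_of_eqOn_comp {g : ι → α} (hs : MapsTo f s s) (hg : EqOn (g ∘ f) g s)
    (hk : k ∈ s) (n : ℕ) : g (f^[n] k) = g k := by
  induction n with
  | zero => rfl
  | succ n ih => rw [iterate_succ_apply', ← ih, ← hg (hs.iterate n hk), comp_apply]

end Iterate

lemma range_eq_singleton_prod_range_snd {ι α β : Type*} {f : ι → α × β} {a : α}
    (hf : ∀ i, (f i).1 = a) : range f = {a} ×ˢ range fun i ↦ (f i).2 := by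
  rw [singleton_prod, ← range_comp]
  exact congrArg range (funext fun i ↦ Prod.ext (hf i) rfl)

/-- The combinatorial content of a coding, for a family of pairs `ν` indexed by a subset `s` of an
arbitrary preorder. Neither computability nor an order on the coordinates is retained: the growth of
the second coordinate of `ν ∘ ξ` is weakened to injectivity. -/
structure IsWeakCoding {ι α β : Type*} [Preorder ι] (s : Set ι) (ν : ι → α × β) (ξ : ι → ι) :
    Prop where
  mapsTo : MapsTo ξ s s
  lt_apply : ∀ n ∈ s, n < ξ n
  fst_eqOn : EqOn (fun n ↦ (ν (ξ n)).1) (fun n ↦ (ν n).1) s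
  snd_injOn : InjOn (fun n ↦ (ν (ξ n)).2) s

namespace IsWeakCoding

variable {ι α β : Type*} [Preorder ι] {s : Set ι} {ν : ι → α × β} {ξ : ι → ι} {k : ι}

lemma iterate_injective (hξ : IsWeakCoding s ν ξ) (hk : k ∈ s) : Injective fun n ↦ ξ^[n] k :=
  (strictMono_iterate_of_forall_mem_lt hξ.mapsTo hξ.lt_apply hk).injective

lemma fst_iterate (hξ : IsWeakCoding s ν ξ) (hk : k ∈ s) (n : ℕ) :
    (ν (ξ (ξ^[n] k))).1 = (ν k).1 :=
  (hξ.fst_eqOn (hξ.mapsTo.iterate n hk)).trans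
    (apply_iterate_eq_of_eqOn_comp (g := fun n ↦ (ν n).1) hξ.mapsTo hξ.fst_eqOn hk n)

lemma snd_iterate_injective (hξ : IsWeakCoding s ν ξ) (hk : k ∈ s) :
    Injective fun n ↦ (ν (ξ (ξ^[n] k))).2 := fun m n hmn ↦
  hξ.iterate_injective hk <|
    hξ.snd_injOn (hξ.mapsTo.iterate m hk) (hξ.mapsTo.iterate n hk) hmn

lemma iterate_mem_image (hξ : IsWeakCoding s ν ξ) (hk : k ∈ s) (n : ℕ) :
    ν (ξ (ξ^[n] k)) ∈ ν '' s :=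
  mem_image_of_mem ν (hξ.mapsTo (hξ.mapsTo.iterate n hk))

lemma infinite_setOf_fst_eq (hξ : IsWeakCoding s ν ξ) (hk : k ∈ s) :
    {n | n ∈ s ∧ (ν (ξ n)).1 = (ν k).1}.Infinite :=
  infinite_of_injective_forall_mem (hξ.iterate_injective hk) fun n ↦
    ⟨hξ.mapsTo.iterate n hk, hξ.fst_iterate hk n⟩

lemma infinite_row (hξ : IsWeakCoding s ν ξ) (hk : k ∈ s) :
    {b | ((ν k).1, b) ∈ ν '' s}.Infinite :=
  infinite_of_injective_forall_mem (hξ.snd_iterate_injective hk) fun n ↦ by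
    simpa only [mem_ofPred_eq, ← hξ.fst_iterate hk n] using hξ.iterate_mem_image hk n

lemma infinite_range_iterate (hξ : IsWeakCoding s ν ξ) (hk : k ∈ s) :
    (range fun n ↦ ν (ξ (ξ^[n] k))).Infinite :=
  infinite_range_of_injective <|
    Injective.of_comp (f := Prod.snd) (hξ.snd_iterate_injective hk)

end IsWeakCoding

namespace IsCoding

variable {ν : ℕ → ℕ × ℕ} {ξ : ℕ → ℕ}

lemma lt_apply (hξ : IsCoding ν ξ) {n : ℕ} (hn : 1 ≤ n) : n < ξ n := by
  obtain ⟨-, one_lt, -, -, step⟩ := hξ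
  induction n, hn using Nat.le_induction with
  | base => exact one_lt
  | succ n hn ih => exact (Nat.succ_le_of_lt ih).trans_lt (step n hn).1

lemma fst_apply (hξ : IsCoding ν ξ) {n : ℕ} (hn : 1 ≤ n) : (ν (ξ n)).1 = (ν n).1 := by
  obtain ⟨-, -, fst_one, -, step⟩ := hξ
  cases n, hn using Nat.le_induction with
  | base => exact fst_one
  | succ n hn => exact (step n hn).2.1

lemma strictMonoOn_snd (hξ : IsCoding ν ξ) : StrictMonoOn (fun n ↦ (ν (ξ n)).2) (Ici 1) := by
  obtain ⟨-, -, -, -, step⟩ := hξ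
  exact strictMonoOn_of_lt_add_one ordConnected_Ici fun n _ hn _ ↦
    (le_max_right _ _).trans_lt (step n hn).2.2

lemma isWeakCoding (hξ : IsCoding ν ξ) : IsWeakCoding (Ici 1) ν ξ where
  mapsTo _ hn := le_trans hn (hξ.lt_apply hn).le
  lt_apply _ hn := hξ.lt_apply hn
  fst_eqOn _ hn := hξ.fst_apply hn
  snd_injOn := hξ.strictMonoOn_snd.injOn

end IsCoding

theorem stmt_10_general {ι α β : Type*} [Preorder ι] {s : Set ι} {E : Set (α × β)}
    {ν : ι → α × β} {ξ : ι → ι} (hE : ∀ a, ∃ b, (a, b) ∈ E) (hν : E = ν '' s)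
    (hξ : IsWeakCoding s ν ξ) :
    (∀ a, {n | n ∈ s ∧ (ν (ξ n)).1 = a}.Infinite) ∧
    (∀ a, {b | (a, b) ∈ E}.Infinite) ∧
    (∀ k ∈ s, ∀ a, (ν k).1 = a →
      (range fun n ↦ ν (ξ (ξ^[n] k))) = {a} ×ˢ (range fun n ↦ (ν (ξ (ξ^[n] k))).2) ∧
      (range fun n ↦ ν (ξ (ξ^[n] k))).Infinite ∧
      (range fun n ↦ ν (ξ (ξ^[n] k))) ⊆ E) := by
  subst hν
  have exists_index (a : α) : ∃ k ∈ s, (ν k).1 = a := by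
    obtain ⟨b, k, hk, hkab⟩ := hE a
    exact ⟨k, hk, congrArg Prod.fst hkab⟩
  refine ⟨fun a ↦ ?_, fun a ↦ ?_, ?_⟩
  · obtain ⟨k, hk, rfl⟩ := exists_index a
    exact hξ.infinite_setOf_fst_eq hk
  · obtain ⟨k, hk, rfl⟩ := exists_index a
    exact hξ.infinite_row hk
  · rintro k hk _ rfl
    exact ⟨range_eq_singleton_prod_range_snd (hξ.fst_iterate hk), hξ.infinite_range_iterate hk,
      range_subset_iff.2 (hξ.iterate_mem_image hk)⟩

theorem stmt_10 (E : Set (ℕ × ℕ)) (ν : ℕ → ℕ × ℕ) (ξ : ℕ → ℕ)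
    (hE : IsEquivRel E) (hν : IsEnumeration ν E) (hξ : IsCoding ν ξ) :
    (∀ i, 1 ≤ i → {n | 1 ≤ n ∧ (ν (ξ n)).1 = i}.Infinite) ∧
    IC E ∧
    (∀ k, 1 ≤ k → ∀ i, ν k = (i, i) →
      {e | ∃ n : ℕ, ν (ξ (ξ^[n] k)) = e} =
        ({i} : Set ℕ) ×ˢ {j | ∃ n : ℕ, (ν (ξ (ξ^[n] k))).2 = j} ∧
      {e | ∃ n : ℕ, ν (ξ (ξ^[n] k)) = e}.Infinite ∧
      {e | ∃ n : ℕ, ν (ξ (ξ^[n] k)) = e} ⊆ E) := by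
  have h := stmt_10_general (fun i ↦ ⟨i, hE.1 i⟩) hν.2 hξ.isWeakCoding
  exact ⟨fun i _ ↦ h.1 i, h.2.1, fun k hk i hki ↦ h.2.2 k hk i (congrArg Prod.fst hki)⟩
end

section
/- If E is an equivalence relation on ℕ in which every equivalence class is infinite, and ν is an enumeration of E, then there exists a coding ξ of ν. -/
/-!
A coding can be found by unbounded search: given `ξ n`, let `ξ (n + 1)` be the least `k > ξ n` such
that `ν k` lies over `(ν (n + 1)).1` with a sufficiently large second coordinate. The search always
succeeds, because the indices up to `ξ n` and the second coordinates up to any given bound together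
rule out only finitely many elements of an infinite class.
-/

section Computability

variable {α : Type*} [Primcodable α]

theorem computablePred_and {p q : α → Prop} (hp : ComputablePred p) (hq : ComputablePred q) :
    ComputablePred fun a => p a ∧ q a := by
  classical
  exact ((Primrec.and.to_comp.comp hp.decide hq.decide).of_eq
    fun a => (Bool.decide_and (p a) (q a)).symm).computablePred

theorem computablePred_eq {β : Type*} [Primcodable β] {f g : α → β}
    (hf : Computable f) (hg : Computable g) : ComputablePred fun a => f a = g a := by
  classical
  exact (Primrec.eq.decide.to_comp.comp hf hg).computablePred

theorem computablePred_lt {f g : α → ℕ} (hf : Computable f) (hg : Computable g) :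
    ComputablePred fun a => f a < g a :=
  (Primrec.nat_lt.decide.to_comp.comp hf hg).computablePred

theorem exists_computable_seq {R : ℕ → ℕ → ℕ → Prop}
    (hR : ComputablePred fun x : (ℕ × ℕ) × ℕ => R x.1.1 x.1.2 x.2)
    (hex : ∀ n p, ∃ k, R n p k) (a : ℕ) :
    ∃ ξ : ℕ → ℕ, Computable ξ ∧ ξ 0 = a ∧ ∀ n, R n (ξ n) (ξ (n + 1)) := by
  classical
  let next (x : ℕ × ℕ) : ℕ := Nat.find (hex x.1 x.2)
  have hnext : Computable next :=
    Computable.find (P := fun (x : ℕ × ℕ) k => R x.1 x.2 k) hR fun x => hex x.1 x.2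
  let ξ (n : ℕ) : ℕ := Nat.rec a (fun m p => next (m, p)) n
  have hξ : Computable ξ :=
    Computable.nat_rec Computable.id (Computable.const a) (hnext.comp Computable.snd).to₂
  exact ⟨ξ, hξ, rfl, fun n => Nat.find_spec (hex n (ξ n))⟩

end Computability

theorem exists_gt_fst_eq_lt_snd {ι α β : Type*} [LinearOrder ι] [LocallyFiniteOrderBot ι]
    [LinearOrder β] [LocallyFiniteOrderBot β] {ν : ι → α × β} {i : α}
    (hi : {j | (i, j) ∈ Set.range ν}.Infinite) (p : ι) (b : β) :
    ∃ k, p < k ∧ (ν k).1 = i ∧ b < (ν k).2 := by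
  have hexcluded : (Set.Iic b ∪ (fun k => (ν k).2) '' Set.Iic p).Finite :=
    (Set.finite_Iic b).union ((Set.finite_Iic p).image _)
  obtain ⟨j, ⟨k, hk⟩, hj⟩ := hi.exists_notMem_finite hexcluded
  have hbj : b < j := not_le.1 fun hle => hj (Or.inl hle)
  have hpk : p < k := not_le.1 fun hle => hj (Or.inr ⟨k, hle, congrArg Prod.snd hk⟩)
  exact ⟨k, hpk, congrArg Prod.fst hk, by rwa [hk]⟩

/-- `k` is an admissible value of `ξ (n + 1)` for a coding `ξ` of `ν` with `ξ n = p`. The bound `1`,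
which a coding needs only at `n = 0`, is imposed at every step so that `n = 0` is not special. -/
def IsCodingStep (ν : ℕ → ℕ × ℕ) (n p k : ℕ) : Prop :=
  p < k ∧ (ν k).1 = (ν (n + 1)).1 ∧ max (max 1 (ν (n + 1)).1) (ν p).2 < (ν k).2

theorem computablePred_isCodingStep {ν : ℕ → ℕ × ℕ} (hν : Computable ν) :
    ComputablePred fun x : (ℕ × ℕ) × ℕ => IsCodingStep ν x.1.1 x.1.2 x.2 := by
  have hp : Computable fun x : (ℕ × ℕ) × ℕ => x.1.2 := Computable.snd.comp Computable.fst
  have hνk : Computable fun x : (ℕ × ℕ) × ℕ => ν x.2 := hν.comp Computable.snd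
  have hfst : Computable fun x : (ℕ × ℕ) × ℕ => (ν (x.1.1 + 1)).1 :=
    Computable.fst.comp
      (hν.comp (Computable.succ.comp (Computable.fst.comp Computable.fst)))
  have hmax : Computable₂ (max : ℕ → ℕ → ℕ) := Primrec.nat_max.to_comp
  have hbound : Computable fun x : (ℕ × ℕ) × ℕ => max (max 1 (ν (x.1.1 + 1)).1) (ν x.1.2).2 :=
    hmax.comp (hmax.comp (Computable.const 1) hfst) (Computable.snd.comp (hν.comp hp))
  exact computablePred_and (computablePred_lt hp Computable.snd)
    (computablePred_and (computablePred_eq (Computable.fst.comp hνk) hfst)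
      (computablePred_lt hbound (Computable.snd.comp hνk)))

theorem isCoding_of_isCodingStep {ν : ℕ → ℕ × ℕ} {ξ : ℕ → ℕ} (hξ : Computable ξ) (h0 : 1 ≤ ξ 0)
    (hstep : ∀ n, IsCodingStep ν n (ξ n) (ξ (n + 1))) : IsCoding ν ξ := by
  obtain ⟨hlt₀, hfst₀, hsnd₀⟩ := hstep 0
  refine ⟨hξ, h0.trans_lt hlt₀, hfst₀, (le_max_left _ _).trans_lt hsnd₀, fun n _ => ?_⟩
  obtain ⟨hlt, hfst, hsnd⟩ := hstep n
  refine ⟨hlt, hfst, ?_⟩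
  rw [hfst]
  exact (max_le_max_right _ (le_max_right _ _)).trans_lt hsnd

theorem stmt_11_general (E : Set (ℕ × ℕ)) (ν : ℕ → ℕ × ℕ)
    (hE : ∀ e ∈ E, {j | (e.1, j) ∈ E}.Infinite) (hν : IsEnumeration ν E) :
    ∃ ξ : ℕ → ℕ, IsCoding ν ξ := by
  obtain ⟨hcomp, rfl⟩ := hν
  have hclass (n : ℕ) : {j | ((ν (n + 1)).1, j) ∈ Set.range ν}.Infinite := by
    refine (hE (ν (n + 1)) ⟨n + 1, n.succ_pos, rfl⟩).mono ?_
    rintro j ⟨k, -, hk⟩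
    exact ⟨k, hk⟩
  have hex (n p : ℕ) : ∃ k, IsCodingStep ν n p k := exists_gt_fst_eq_lt_snd (hclass n) p _
  obtain ⟨ξ, hξ, h0, hstep⟩ :=
    exists_computable_seq (computablePred_isCodingStep hcomp) hex 1
  exact ⟨ξ, isCoding_of_isCodingStep hξ h0.ge hstep⟩

theorem stmt_11 (E : Set (ℕ × ℕ)) (ν : ℕ → ℕ × ℕ) (hE : IsEquivRel E)
    (hIC : IC E) (hν : IsEnumeration ν E) :
    ∃ ξ : ℕ → ℕ, IsCoding ν ξ :=
  stmt_11_general E ν (fun e _ => hIC e.1) hν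
end
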